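/- Icicle path lemma: let 1 ≤ m ≤ n and k ≥ 3, and let B be a blue path on m vertices present on the board. Then within 2n − 2m rounds Builder can force either a red C_k or a blue line forest on n vertices with at most k components; that is, r̃_B(C_k, 𝓛^{(≤k)}_n) ≤ 2n − 2m. -/

import Mathlib

open SimpleGraph

/-- A board state: the set of red edges and the set of blue edges. -/
abbrev Board : Type := Set (Sym2 ℕ) × Set (Sym2 ℕ)

/-- The set of already colored edges of a board. -/
def Board.colored (B : Board) : Set (Sym2 ℕ) := B.1 ∪ B.2

/-- A Builder strategy selects an edge given the current board. -/
abbrev BuilderStrat : Type := Board → Sym2 ℕ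

/-- A Painter strategy colors the selected edge (true = red, false = blue). -/
abbrev PainterStrat : Type := Board → Sym2 ℕ → Bool

/-- The board after `t` rounds of play from `init`. -/
def playGame (b : BuilderStrat) (p : PainterStrat) (init : Board) : ℕ → Board
  | 0 => init
  | t + 1 =>
      let B := playGame b p init t
      let e := b B
      if p B e then (insert e B.1, B.2) else (B.1, insert e B.2)

/-- Builder's strategy is valid from `init`: along any play it always selects a
previously unselected non-loop edge. -/
def ValidFrom (b : BuilderStrat) (init : Board) : Prop :=
  ∀ p : PainterStrat, ∀ t : ℕ,
    ¬ (b (playGame b p init t)).IsDiag ∧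
      b (playGame b p init t) ∉ (playGame b p init t).colored

/-- Builder can force the winning condition `W` within `t` rounds, starting from `init`. -/
def BuilderWinsIn (init : Board) (W : Board → Prop) (t : ℕ) : Prop :=
  ∃ b : BuilderStrat, ValidFrom b init ∧
    ∀ p : PainterStrat, ∃ s, s ≤ t ∧ W (playGame b p init s)

/-- `G` contains a copy of `H`. -/
def HasCopy {α β : Type} (H : SimpleGraph α) (G : SimpleGraph β) : Prop :=
  ∃ f : α ↪ β, ∀ x y, H.Adj x y → G.Adj (f x) (f y)

/-- The red part of the board contains a copy of `H`. -/
def RedCopy {α : Type} (H : SimpleGraph α) (B : Board) : Prop :=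
  HasCopy H (fromEdgeSet B.1)

/-- The blue part of the board contains a copy of `H`. -/
def BlueCopy {α : Type} (H : SimpleGraph α) (B : Board) : Prop :=
  HasCopy H (fromEdgeSet B.2)

/-- The empty board. -/
def emptyBoard : Board := (∅, ∅)

/-- Winning condition: a red `C_k` or a blue `C_n`. -/
def WinCC (k n : ℕ) (B : Board) : Prop :=
  RedCopy (cycleGraph k) B ∨ BlueCopy (cycleGraph n) B

/-- Winning condition: a red `C_k` or a blue path on `n` vertices. -/
def WinCP (k n : ℕ) (B : Board) : Prop :=
  RedCopy (cycleGraph k) B ∨ BlueCopy (pathGraph n) B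

/-- A board consisting of a single blue cycle on the vertices `0, …, m-1`. -/
def blueCycleBoard (m : ℕ) : Board :=
  (∅, {e | ∃ i : ℕ, i < m ∧ e = s(i, (i + 1) % m)})

/-- A board consisting of a single blue path on the vertices `0, …, m-1`. -/
def bluePathBoard (m : ℕ) : Board :=
  (∅, {e | ∃ i : ℕ, i + 1 < m ∧ e = s(i, i + 1)})

/-- The blue part of the board contains a line forest on `n` vertices with at most
`k` components. -/
def BlueLineForest (n k : ℕ) (B : Board) : Prop :=
  ∃ t : ℕ, t ≤ k ∧ ∃ (m : Fin t → ℕ) (f : (i : Fin t) → Fin (m i) ↪ ℕ),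
    (∑ i, m i) = n ∧ (∀ i, 1 ≤ m i) ∧
    (∀ (i : Fin t) x y, (SimpleGraph.pathGraph (m i)).Adj x y →
      (SimpleGraph.fromEdgeSet B.2).Adj (f i x) (f i y)) ∧
    (∀ (i j : Fin t) x y, i ≠ j → f i x ≠ f j y)

/-!
Builder maintains an icicle path: at most `k - 1` disjoint blue paths whose first vertices form, in
this order, a red path. With `t` paths and `d` vertices still missing she needs `2 * d + t - 1` more
rounds.

She joins a fresh vertex `w` to the first vertex of the first path. If the edge is red, `w` is a new
one-vertex path at the front, and the round has gained both a vertex and a path; should there now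
be `k` paths, she also joins `w` to the first vertex of the last path, where red closes a `C_k` and
blue makes `w` extend that path. If the edge is blue, `w` extends the first path, which may however
lose its red connection to the others. She then plays from an end of this path to the first vertex
of the next one: blue merges the two paths and she repeats, red makes the icicle path whole again.
The rounds spent on blue edges are paid for by the decrease of `t`.
-/

/-- The board after Painter colors `e` red. -/
abbrev Board.addRed (B : Board) (e : Sym2 ℕ) : Board := (insert e B.1, B.2)

/-- The board after Painter colors `e` blue. -/
abbrev Board.addBlue (B : Board) (e : Sym2 ℕ) : Board := (B.1, insert e B.2)

/-- The graph formed by the red edges of a board. -/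
abbrev Board.redGraph (B : Board) : SimpleGraph ℕ := fromEdgeSet B.1

/-- The graph formed by the blue edges of a board. -/
abbrev Board.blueGraph (B : Board) : SimpleGraph ℕ := fromEdgeSet B.2

/-- The winning condition of the icicle path lemma, named in line with `WinCC` and `WinCP`: a red
`C_k` or a blue line forest on `n` vertices with at most `k` components. -/
def WinCL (k n : ℕ) (B : Board) : Prop :=
  RedCopy (cycleGraph k) B ∨ BlueLineForest n k B

section Game

variable {W : Board → Prop} {B : Board} {r s : ℕ}

/-- `Forces W r B` is the recursive form of "Builder can force `W` within `r` rounds from `B`":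
either `W` holds already, or some legal move works against both answers of Painter. -/
inductive Forces (W : Board → Prop) : ℕ → Board → Prop
  | win {r : ℕ} {B : Board} (hW : W B) : Forces W r B
  | move {r : ℕ} {B : Board} (e : Sym2 ℕ) (hdiag : ¬ e.IsDiag) (he : e ∉ B.colored)
      (hred : Forces W r (B.addRed e)) (hblue : Forces W r (B.addBlue e)) : Forces W (r + 1) B

lemma Forces.mono (h : Forces W r B) (hrs : r ≤ s) : Forces W s B := by
  induction h generalizing s with
  | win hW => exact .win hW
  | move e hdiag he _ _ ihred ihblue =>
    obtain ⟨s, rfl⟩ := Nat.exists_eq_add_of_le' (Nat.one_le_of_lt hrs)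
    exact .move e hdiag he (ihred (by omega)) (ihblue (by omega))

-- If the edge is already colored, then one of the two continuations is `B` itself.
lemma Forces.of_edge {x y : ℕ} (hxy : x ≠ y) (hred : Forces W r (B.addRed s(x, y)))
    (hblue : Forces W r (B.addBlue s(x, y))) : Forces W (r + 1) B := by
  by_cases hR : s(x, y) ∈ B.1
  · rw [Board.addRed, Set.insert_eq_of_mem hR] at hred
    exact hred.mono r.le_succ
  by_cases hG : s(x, y) ∈ B.2
  · rw [Board.addBlue, Set.insert_eq_of_mem hG] at hblue
    exact hblue.mono r.le_succ
  · exact .move s(x, y) hxy (by simp [Board.colored, hR, hG]) hred hblue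

lemma Board.finite_colored_addRed (hB : B.colored.Finite) (e : Sym2 ℕ) :
    (B.addRed e).colored.Finite := by
  simpa only [Board.colored, Set.insert_union] using hB.insert e

lemma Board.finite_colored_addBlue (hB : B.colored.Finite) (e : Sym2 ℕ) :
    (B.addBlue e).colored.Finite := by
  simpa only [Board.colored, Set.union_insert] using hB.insert e

lemma finite_colored_playGame (b : BuilderStrat) (p : PainterStrat) (hB : B.colored.Finite)
    (t : ℕ) : (playGame b p B t).colored.Finite := by
  induction t with
  | zero => exact hB
  | succ t ih =>
    rw [playGame]
    split_ifs
    · exact Board.finite_colored_addRed ih _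
    · exact Board.finite_colored_addBlue ih _

lemma exists_not_isDiag_notMem_of_finite {S : Set (Sym2 ℕ)} (hS : S.Finite) :
    ∃ e : Sym2 ℕ, ¬ e.IsDiag ∧ e ∉ S := by
  have hinj : Function.Injective fun i : ℕ => s(0, i + 1) := fun i j hij => by simpa using hij
  obtain ⟨i, hi⟩ := (hS.preimage hinj.injOn).exists_notMem
  exact ⟨s(0, i + 1), by simp, hi⟩

-- Builder follows a derivation of `Forces W r₀ B` with `r₀` minimal.
lemma exists_move_of_finite_colored (W : Board → Prop) (hB : B.colored.Finite) :
    ∃ e : Sym2 ℕ, (¬ e.IsDiag ∧ e ∉ B.colored) ∧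
      ∀ r, Forces W (r + 1) B → W B ∨ Forces W r (B.addRed e) ∧ Forces W r (B.addBlue e) := by
  classical
  obtain ⟨e₀, he₀⟩ := exists_not_isDiag_notMem_of_finite hB
  by_cases h : ∃ r, Forces W r B
  · obtain ⟨r₀, hr₀, hmin⟩ : ∃ r₀, Forces W r₀ B ∧ ∀ r, Forces W r B → r₀ ≤ r :=
      ⟨Nat.find h, Nat.find_spec h, fun r => Nat.find_min' h⟩
    cases hr₀ with
    | win hW => exact ⟨e₀, he₀, fun _ _ => .inl hW⟩
    | move e hdiag he hred hblue =>
      refine ⟨e, ⟨hdiag, he⟩, fun r hr => .inr ?_⟩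
      have hle := Nat.le_of_succ_le_succ (hmin _ hr)
      exact ⟨hred.mono hle, hblue.mono hle⟩
  · exact ⟨e₀, he₀, fun r hr => absurd ⟨_, hr⟩ h⟩

theorem Forces.builderWinsIn (h : Forces W r B) (hB : B.colored.Finite) :
    BuilderWinsIn B W r := by
  choose! b hlegal hmove using fun B => exists_move_of_finite_colored (B := B) W
  have hfin (p t) := finite_colored_playGame b p hB t
  refine ⟨b, fun p t => hlegal _ (hfin p t), fun p => ?_⟩
  suffices ∀ r t, Forces W r (playGame b p B t) → ∃ s ≤ t + r, W (playGame b p B s) by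
    simpa using this r 0 h
  intro r
  induction r with
  | zero =>
    rintro t ⟨hW⟩
    exact ⟨t, le_rfl, hW⟩
  | succ r ih =>
    intro t ht
    obtain hW | ⟨hred, hblue⟩ := hmove _ (hfin p t) r ht
    · exact ⟨t, by omega, hW⟩
    · have hnext : Forces W r (playGame b p B (t + 1)) := by
        rw [playGame]
        split_ifs
        exacts [hred, hblue]
      obtain ⟨s, hs, hW⟩ := ih (t + 1) hnext
      exact ⟨s, by omega, hW⟩

end Game

section Graph

variable {α : Type*} {G G' R R' : SimpleGraph α} {l l' : List α} {L L' : List (List α)}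

lemma adj_getElem_of_pathGraph_adj (h : l.IsChain G.Adj) {i j : Fin l.length}
    (hij : (pathGraph l.length).Adj i j) : G.Adj l[i] l[j] := by
  have hstep := List.isChain_iff_getElem.1 h
  obtain hij | hij := pathGraph_adj.1 hij
  · simpa [hij] using hstep i (by omega)
  · simpa [hij] using (hstep j (by omega)).symm

lemma hasCopy_cycleGraph_of_isChain {α : Type} {G : SimpleGraph α} {v : α} {l : List α}
    (hnodup : (v :: l).Nodup) (hchain : (v :: l ++ [v]).IsChain G.Adj) :
    HasCopy (cycleGraph (l.length + 1)) G := by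
  have hadj (i j : Fin (v :: l).length) (hij : (j - i).val = 1) :
      G.Adj ((v :: l).get i) ((v :: l).get j) := by
    have hi : i.val < l.length + 1 := i.isLt
    have hj : j.val = i + 1 ∨ i.val = l.length ∧ j.val = 0 := by
      obtain hle | hlt := le_or_gt i j
      · have := Fin.coe_sub_iff_le.2 hle
        omega
      · have := Fin.coe_sub_iff_lt.2 hlt
        simp only [List.length_cons] at this
        omega
    have hstep := List.isChain_iff_getElem.1 hchain i (by simpa using hi)
    rw [List.getElem_append_left i.isLt] at hstep
    obtain hj | ⟨hi, hj⟩ := hj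
    · rw [List.getElem_append_left (hj ▸ j.isLt)] at hstep
      simpa only [List.get_eq_getElem, hj] using hstep
    · simpa [hi, hj] using hstep
  refine ⟨⟨(v :: l).get, hnodup.injective_get⟩, fun i j hij => ?_⟩
  obtain hij | hij := cycleGraph_adj'.1 hij
  · exact (hadj j i hij).symm
  · exact hadj i j hij

lemma filterMap_head?_sublist_flatten (L : List (List α)) :
    (L.filterMap List.head?).Sublist L.flatten := by
  induction L with
  | nil => simp
  | cons l L ih =>
    cases l with
    | nil => simpa [List.filterMap_cons] using ih
    | cons x xs => simpa using ih.trans (List.sublist_append_right xs _)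

lemma length_filterMap_head? (hL : [] ∉ L) : (L.filterMap List.head?).length = L.length := by
  rw [List.filterMap_length_eq_length]
  intro l hl
  rw [List.isSome_head?]
  exact ne_of_mem_of_not_mem hl hL

/-- `L` lists the components of a line forest contained in `G`, each given by its vertices in
the order of the path. -/
structure IsLineForest (G : SimpleGraph α) (L : List (List α)) : Prop where
  nil_notMem : [] ∉ L
  nodup : L.flatten.Nodup
  isChain : ∀ l ∈ L, l.IsChain G.Adj

namespace IsLineForest

lemma exists_eq_cons (h : IsLineForest G L) (hl : l ∈ L) : ∃ x xs, l = x :: xs :=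
  List.exists_cons_of_ne_nil (ne_of_mem_of_not_mem hl h.nil_notMem)

lemma ne_of_mem (h : IsLineForest G (l :: L)) (hl' : l' ∈ L) {x y : α} (hx : x ∈ l)
    (hy : y ∈ l') : x ≠ y :=
  (List.nodup_append.1 h.nodup).2.2 x hx y (List.mem_flatten_of_mem hl' hy)

lemma mono (h : IsLineForest G L) (hG : G ≤ G') : IsLineForest G' L :=
  ⟨h.nil_notMem, h.nodup, fun l hl => (h.isChain l hl).imp fun _ _ hadj => hG hadj⟩

lemma perm (h : IsLineForest G L) (hL : L.Perm L') : IsLineForest G L' :=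
  ⟨fun hnil => h.nil_notMem (hL.mem_iff.2 hnil), hL.flatten.nodup_iff.1 h.nodup,
    fun l hl => h.isChain l (hL.mem_iff.2 hl)⟩

lemma of_cons (h : IsLineForest G (l :: L)) : IsLineForest G L :=
  ⟨fun hnil => h.nil_notMem (.tail _ hnil), (List.nodup_append.1 h.nodup).2.1,
    fun l hl => h.isChain l (.tail _ hl)⟩

lemma cons_singleton (h : IsLineForest G L) {w : α} (hw : w ∉ L.flatten) :
    IsLineForest G ([w] :: L) :=
  ⟨by simpa using h.nil_notMem, by simpa using ⟨by simpa using hw, h.nodup⟩,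
    by simpa using h.isChain⟩

lemma reverse_cons (h : IsLineForest G (l :: L)) : IsLineForest G (l.reverse :: L) where
  nil_notMem := by simpa using h.nil_notMem
  nodup := (l.reverse_perm.symm.append_right L.flatten).nodup_iff.1 h.nodup
  isChain := by
    simpa [List.isChain_reverse, G.adj_comm] using h.isChain

lemma append (h : IsLineForest G (l :: l' :: L))
    (hadj : ∀ x ∈ l.getLast?, ∀ y ∈ l'.head?, G.Adj x y) : IsLineForest G ((l ++ l') :: L) where
  nil_notMem := by
    have hl : l ≠ [] := ne_of_mem_of_not_mem List.mem_cons_self h.nil_notMem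
    simpa [hl] using h.of_cons.of_cons.nil_notMem
  nodup := by simpa using h.nodup
  isChain := List.forall_mem_cons.2
    ⟨List.isChain_append.2 ⟨h.isChain l (by simp), h.isChain l' (by simp), hadj⟩,
      h.of_cons.of_cons.isChain⟩

lemma exists_length_flatten_add_one (h : IsLineForest G L) (hL : 0 < L.flatten.length) :
    ∃ L', IsLineForest G L' ∧ L'.length ≤ L.length ∧
      L'.flatten.length + 1 = L.flatten.length := by
  match L with
  | [] => simp at hL
  | [] :: L => exact absurd List.mem_cons_self h.nil_notMem
  | [x] :: L => exact ⟨L, h.of_cons, by simp, by simp⟩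
  | (x :: y :: l) :: L =>
    refine ⟨(y :: l) :: L, ⟨?_, h.nodup.of_cons, ?_⟩, by simp, by simp⟩
    · simpa using h.of_cons.nil_notMem
    · exact List.forall_mem_cons.2 ⟨(h.isChain _ List.mem_cons_self).tail, h.of_cons.isChain⟩

lemma exists_length_flatten_eq (h : IsLineForest G L) {n : ℕ} (hn : n ≤ L.flatten.length) :
    ∃ L', IsLineForest G L' ∧ L'.length ≤ L.length ∧ L'.flatten.length = n := by
  induction hn using Nat.decreasingInduction with
  | self => exact ⟨L, h, le_rfl, rfl⟩
  | of_succ n _ ih =>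
    obtain ⟨L₁, h₁, hlen₁, hn₁⟩ := ih
    obtain ⟨L₂, h₂, hlen₂, hn₂⟩ := h₁.exists_length_flatten_add_one (by omega)
    exact ⟨L₂, h₂, hlen₂.trans hlen₁, by omega⟩

end IsLineForest

/-- An icicle path: a line forest in `G` (the icicles) whose first vertices form, in the order of
the list, a path in `R`. For Builder `R` is the red and `G` the blue graph of the board. -/
structure IsIciclePath (R G : SimpleGraph α) (L : List (List α)) : Prop where
  forest : IsLineForest G L
  heads : (L.filterMap List.head?).IsChain R.Adj

namespace IsIciclePath

lemma singleton (h : IsLineForest G [l]) : IsIciclePath R G [l] :=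
  ⟨h, by cases l <;> simp [List.filterMap_cons]⟩

lemma mono (h : IsIciclePath R G L) (hR : R ≤ R') (hG : G ≤ G') : IsIciclePath R' G' L :=
  ⟨h.forest.mono hG, h.heads.imp fun _ _ hadj => hR hadj⟩

lemma cons {x y : α} {xs ys : List α} (hforest : IsLineForest G ((x :: xs) :: (y :: ys) :: L))
    (hheads : (((y :: ys) :: L).filterMap List.head?).IsChain R.Adj) (hxy : R.Adj x y) :
    IsIciclePath R G ((x :: xs) :: (y :: ys) :: L) :=
  ⟨hforest, by simpa [hxy] using hheads⟩

lemma extend_last {w y : α} {ys : List α} (h : IsIciclePath R G ([w] :: (L ++ [y :: ys])))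
    (hwy : G.Adj w y) : IsIciclePath R G ((w :: y :: ys) :: L) where
  forest := by
    have hperm : ([w] :: (L ++ [y :: ys])).Perm ([w] :: (y :: ys) :: L) :=
      (List.perm_append_singleton _ _).cons _
    exact (h.forest.perm hperm).append (by simpa using hwy)
  heads := by
    have := h.heads
    simp only [List.filterMap_cons, List.head?_cons, List.filterMap_append] at this ⊢
    exact List.IsChain.left_of_append (l₁ := w :: _) this

lemma hasCopy_cycleGraph {α : Type} {R G : SimpleGraph α} {L : List (List α)} {w y : α}
    {ws ys : List α} (h : IsIciclePath R G ((w :: ws) :: (L ++ [y :: ys]))) (hwy : R.Adj w y) :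
    HasCopy (cycleGraph (L.length + 2)) R := by
  have hlen := length_filterMap_head? fun hnil : [] ∈ L => h.forest.nil_notMem (by simp [hnil])
  have hnodup := h.forest.nodup.sublist (filterMap_head?_sublist_flatten _)
  have hheads := h.heads
  simp only [List.filterMap_cons, List.head?_cons, List.filterMap_append, List.filterMap_nil]
    at hnodup hheads
  have hchain : (w :: L.filterMap List.head? ++ [y, w]).IsChain R.Adj :=
    List.isChain_append_cons_cons.2 ⟨hheads, hwy.symm, .singleton w⟩
  have hcopy := hasCopy_cycleGraph_of_isChain hnodup (by simpa using hchain)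
  rwa [List.length_append, hlen] at hcopy

end IsIciclePath

end Graph

lemma IsLineForest.blueLineForest {B : Board} {L : List (List ℕ)} {n k : ℕ}
    (h : IsLineForest B.blueGraph L) (hk : L.length ≤ k) (hn : n ≤ L.flatten.length) :
    BlueLineForest n k B := by
  obtain ⟨L', h', hlen, hn'⟩ := h.exists_length_flatten_eq hn
  obtain ⟨hnodup, hdisj⟩ := List.nodup_flatten.1 h'.nodup
  have hget (i : Fin L'.length) : L'[i].Nodup := hnodup _ (List.getElem_mem _)
  refine ⟨L'.length, hlen.trans hk, fun i => L'[i].length,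
    fun i => ⟨L'[i].get, (hget i).injective_get⟩, ?_, fun i => ?_, fun i x y hxy => ?_,
    fun i j x y hij heq => ?_⟩
  · rw [← hn', List.length_flatten]
    exact Fin.sum_univ_fun_getElem L' List.length
  · exact List.length_pos_iff.2 fun hnil => h'.nil_notMem (hnil ▸ List.getElem_mem _)
  · exact adj_getElem_of_pathGraph_adj (h'.isChain _ (List.getElem_mem _)) hxy
  · have hdisj' := List.pairwise_iff_getElem.1 hdisj
    have hx : L'[i].get x ∈ L'[i] := List.get_mem _ _
    have hy : L'[i].get x ∈ L'[j] := by
      rw [show L'[i].get x = L'[j].get y from heq]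
      exact List.get_mem _ _
    obtain hij | hij := lt_or_gt_of_ne hij
    · exact hdisj' i j _ _ hij hx hy
    · exact hdisj' j i _ _ hij hy hx

section Builder

variable {B : Board} {k n d : ℕ} {Q : List ℕ} {L : List (List ℕ)}

lemma Board.redGraph_le_addRed (e : Sym2 ℕ) : B.redGraph ≤ (B.addRed e).redGraph :=
  fromEdgeSet_mono (Set.subset_insert _ _)

lemma Board.blueGraph_le_addBlue (e : Sym2 ℕ) : B.blueGraph ≤ (B.addBlue e).blueGraph :=
  fromEdgeSet_mono (Set.subset_insert _ _)

lemma Board.adj_redGraph_addRed {x y : ℕ} (hxy : x ≠ y) : (B.addRed s(x, y)).redGraph.Adj x y := by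
  simp [hxy]

lemma Board.adj_blueGraph_addBlue {x y : ℕ} (hxy : x ≠ y) :
    (B.addBlue s(x, y)).blueGraph.Adj x y := by
  simp [hxy]

/-- Builder wins in time from every icicle path that is `d` vertices short of `n` and has fewer
than `k` icicles. Writing it as `Q :: L` makes `L.length` the number of icicles minus one. -/
def IciclePathsForce (k n d : ℕ) : Prop :=
  ∀ ⦃B : Board⦄ ⦃Q : List ℕ⦄ ⦃L : List (List ℕ)⦄, IsIciclePath B.redGraph B.blueGraph (Q :: L) →
    (Q :: L).length < k → n ≤ (Q :: L).flatten.length + d → Forces (WinCL k n) (2 * d + L.length) B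

lemma IciclePathsForce.zero (k n : ℕ) : IciclePathsForce k n 0 :=
  fun _ _ _ h hk hn => .win (.inr (h.forest.blueLineForest hk.le hn))

lemma IciclePathsForce.forces_of_isLineForest (hd : IciclePathsForce k n d)
    (hforest : IsLineForest B.blueGraph (Q :: L))
    (hheads : (L.filterMap List.head?).IsChain B.redGraph.Adj) (hk : (Q :: L).length < k)
    (hn : n ≤ (Q :: L).flatten.length + d) : Forces (WinCL k n) (2 * d + L.length + 1) B := by
  induction L generalizing B Q with
  | nil => exact (hd (.singleton hforest) hk hn).mono (Nat.le_succ _)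
  | cons P L ih =>
    obtain ⟨y, ys, rfl⟩ : ∃ y ys, P = y :: ys := hforest.exists_eq_cons (by simp)
    obtain ⟨Q, x, rfl⟩ : ∃ Q' x, Q = Q' ++ [x] :=
      (Q.eq_nil_or_concat').resolve_left fun hQ => hforest.nil_notMem (by simp [hQ])
    have hxy : x ≠ y := hforest.ne_of_mem List.mem_cons_self (by simp) (by simp)
    have hrev : IsLineForest B.blueGraph ((x :: Q.reverse) :: (y :: ys) :: L) := by
      simpa using hforest.reverse_cons
    have hheads' := hheads.imp fun _ _ hadj => B.redGraph_le_addRed s(x, y) hadj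
    refine .of_edge hxy (hd (.cons hrev hheads' (B.adj_redGraph_addRed hxy)) ?_ ?_) ?_
    · simpa using hk
    · grind
    · refine ih ((hforest.mono (B.blueGraph_le_addBlue _)).append ?_) ?_ ?_ ?_
      · simp [hxy]
      · simpa using hheads.tail
      · grind
      · simpa [add_assoc, add_left_comm, add_comm] using hn

lemma IciclePathsForce.forces_of_full (hd : IciclePathsForce k n d) {w : ℕ}
    (h : IsIciclePath B.redGraph B.blueGraph ([w] :: Q :: L)) (hk : L.length + 2 = k)
    (hn : n ≤ ([w] :: Q :: L).flatten.length + d) :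
    Forces (WinCL k n) (2 * d + L.length + 1) B := by
  obtain ⟨M, P, hM⟩ : ∃ M P, Q :: L = M ++ [P] :=
    (Q :: L).eq_nil_or_concat'.resolve_left (List.cons_ne_nil Q L)
  have hlen : L.length = M.length := by simpa using congrArg List.length hM
  rw [hM] at h hn
  obtain ⟨y, ys, rfl⟩ : ∃ y ys, P = y :: ys := h.forest.exists_eq_cons (by simp)
  have hwy : w ≠ y := h.forest.ne_of_mem (l' := y :: ys) (by simp) (by simp) (by simp)
  rw [hlen] at hk ⊢
  refine .of_edge hwy (.win (.inl ?_)) (hd (Q := w :: y :: ys) ?_ ?_ ?_)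
  · rw [← hk]
    exact (h.mono (B.redGraph_le_addRed _) le_rfl).hasCopy_cycleGraph (B.adj_redGraph_addRed hwy)
  · exact (h.mono le_rfl (B.blueGraph_le_addBlue _)).extend_last (B.adj_blueGraph_addBlue hwy)
  · grind
  · grind

lemma IciclePathsForce.succ (hd : IciclePathsForce k n d) : IciclePathsForce k n (d + 1) := by
  intro B Q L h hk hn
  obtain ⟨x, xs, rfl⟩ : ∃ x xs, Q = x :: xs := h.forest.exists_eq_cons (by simp)
  obtain ⟨w, hw⟩ := ((x :: xs) :: L).flatten.finite_toSet.exists_notMem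
  have hforest : IsLineForest B.blueGraph ([w] :: (x :: xs) :: L) := h.forest.cons_singleton hw
  have hwx : w ≠ x := hforest.ne_of_mem List.mem_cons_self (by simp) (by simp)
  have hround : 2 * (d + 1) + L.length = 2 * d + L.length + 1 + 1 := by omega
  rw [hround]
  refine .of_edge hwx ?_ ?_
  · have hred := IsIciclePath.cons hforest (h.mono (B.redGraph_le_addRed s(w, x)) le_rfl).heads
      (B.adj_redGraph_addRed hwx)
    by_cases hk' : L.length + 2 < k
    · exact hd hred hk' (by grind)
    · exact hd.forces_of_full hred (by grind) (by grind)
  · have hblue := (hforest.mono (B.blueGraph_le_addBlue s(w, x))).append (by simp [hwx])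
    exact hd.forces_of_isLineForest hblue h.heads.tail hk (by grind)

lemma iciclePathsForce (k n d : ℕ) : IciclePathsForce k n d := by
  induction d with
  | zero => exact .zero k n
  | succ d ih => exact ih.succ

lemma finite_colored_bluePathBoard (m : ℕ) : (bluePathBoard m).colored.Finite := by
  refine ((Set.finite_Iio m).image fun i => s(i, i + 1)).subset ?_
  rintro e (he | ⟨i, hi, rfl⟩)
  · exact absurd he (Set.notMem_empty e)
  · exact ⟨i, Nat.lt_of_succ_lt hi, rfl⟩

lemma isLineForest_bluePathBoard {m : ℕ} (hm : m ≠ 0) :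
    IsLineForest (bluePathBoard m).blueGraph [List.range m] where
  nil_notMem := by simpa using hm
  nodup := by simpa using List.nodup_range
  isChain := by
    have hadj (i : ℕ) (hi : i < m - 1) : (bluePathBoard m).blueGraph.Adj i (i + 1) :=
      (fromEdgeSet_adj _).2 ⟨⟨i, by omega, rfl⟩, i.succ_ne_self.symm⟩
    simpa [List.isChain_range] using hadj

end Builder

/-- Icicle path lemma: for `1 ≤ m ≤ n` and `k ≥ 3`, starting from a blue path on `m`
vertices, within `2n - 2m` rounds Builder can force a red `C_k` or a blue line forest
on `n` vertices with at most `k` components. -/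
theorem icicle_path_lemma (k m n : ℕ) (hm : 1 ≤ m) (hmn : m ≤ n) (hk : 3 ≤ k) :
    BuilderWinsIn (bluePathBoard m)
      (fun B => RedCopy (SimpleGraph.cycleGraph k) B ∨ BlueLineForest n k B)
      (2 * n - 2 * m) := by
  have hstart := isLineForest_bluePathBoard (Nat.one_le_iff_ne_zero.1 hm)
  have hforces : Forces (WinCL k n) (2 * (n - m)) (bluePathBoard m) :=
    iciclePathsForce k n (n - m) (.singleton hstart) (by grind) (by grind)
  rw [← Nat.mul_sub]
  exact hforces.builderWinsIn (finite_colored_bluePathBoard m)
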